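/- arXiv:2012.02271 — 2 statements merged into one kernel-verified Lean document; each statement's English description precedes it below -/
import Mathlib

section
/- Let V be a finite vertex set equipped with a linear order and let G be a simple graph on V. For each vertex u ∈ V define the map M_u = (B_u, U_u) over unordered pairs of distinct vertices by: B_u = { {u,w} : G.Adj u w and u < w } (blocked edges) and U_u = { {u,w} : w ≠ u and (¬G.Adj u w or w < u) } (unblocked edges). Then for all distinct u, v ∈ V, the map M_u agrees with the map M_v if and only if u and v are not adjacent in G. (Key property of the map family constructed in the NP-hardness reduction of the Map Merging Problem from Minimum Graph Coloring, Lemma 1.) -/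
/-- A map is a pair `(B, U)` of sets of edges (blocked, unblocked);
`(B₂, U₂)` agrees with `(B₁, U₁)` if `B₂ ∩ U₁ = ∅` and `U₂ ∩ B₁ = ∅`. -/
def MapAgrees {ε : Type*} (M₂ M₁ : Set ε × Set ε) : Prop :=
  M₂.1 ∩ M₁.2 = ∅ ∧ M₂.2 ∩ M₁.1 = ∅

/-- Blocked edges of the map `M_u` in the reduction from Minimum Graph
Coloring: edges `{u,w}` with `G.Adj u w` and `u < w`. -/
def reductionBlocked {V : Type*} [LinearOrder V] (G : SimpleGraph V) (u : V) :
    Set (Sym2 V) :=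
  {e | ∃ w, e = s(u, w) ∧ G.Adj u w ∧ u < w}

/-- Unblocked edges of the map `M_u` in the reduction from Minimum Graph
Coloring: edges `{u,w}` with `w ≠ u` and (`¬G.Adj u w` or `w < u`). -/
def reductionUnblocked {V : Type*} [LinearOrder V] (G : SimpleGraph V) (u : V) :
    Set (Sym2 V) :=
  {e | ∃ w, e = s(u, w) ∧ w ≠ u ∧ (¬ G.Adj u w ∨ w < u)}

/-- Key property of the map family in the NP-hardness reduction of the Map
Merging Problem (Lemma 1): for distinct vertices `u, v`, the constructed maps
`M_u` and `M_v` agree if and only if `u` and `v` are not adjacent in `G`. -/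
theorem reduction_maps_agree_iff_not_adj
    {V : Type*} [Fintype V] [LinearOrder V] (G : SimpleGraph V)
    (u v : V) (huv : u ≠ v) :
    MapAgrees (reductionBlocked G u, reductionUnblocked G u)
        (reductionBlocked G v, reductionUnblocked G v) ↔ ¬ G.Adj u v := by
  constructor
  · rintro ⟨h1, h2⟩ hadj
    rcases lt_or_gt_of_ne huv with h | h
    · have : s(u, v) ∈ reductionBlocked G u ∩ reductionUnblocked G v :=
        ⟨⟨v, rfl, hadj, h⟩, ⟨u, Sym2.eq_swap, huv, Or.inr h⟩⟩
      exact (Set.eq_empty_iff_forall_notMem.mp h1) _ this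
    · have : s(u, v) ∈ reductionUnblocked G u ∩ reductionBlocked G v :=
        ⟨⟨v, rfl, huv.symm, Or.inr h⟩, ⟨u, Sym2.eq_swap, hadj.symm, h⟩⟩
      exact (Set.eq_empty_iff_forall_notMem.mp h2) _ this
  · intro hn
    refine ⟨Set.eq_empty_iff_forall_notMem.mpr ?_, Set.eq_empty_iff_forall_notMem.mpr ?_⟩
    · rintro e ⟨⟨w, rfl, hw, -⟩, ⟨x, hx, -, -⟩⟩
      rcases Sym2.eq_iff.mp hx with ⟨h, -⟩ | ⟨-, h⟩
      · exact huv h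
      · exact hn (h ▸ hw)
    · rintro e ⟨⟨w, rfl, -, -⟩, ⟨x, hx, hw, -⟩⟩
      rcases Sym2.eq_iff.mp hx with ⟨h, -⟩ | ⟨h, -⟩
      · exact huv h
      · exact hn (h ▸ hw.symm)
end

section
/- Let V be a finite vertex set equipped with a linear order, let G be a simple graph on V, and let {M_u}_{u ∈ V} be the family of maps constructed from G as in the NP-hardness reduction (edges not incident to u unknown in M_u; edges {u,w} with u,w non-adjacent unblocked in both M_u and M_w; each G-edge {u,w} blocked in the map of the smaller endpoint and unblocked in the map of the larger endpoint). Then for every natural number k, there exists a partition of V into at most k classes such that within each class the maps M_u pairwise agree if and only if G is k-colorable. (Core equivalence establishing the reduction from Minimum Graph Coloring to the Map Merging Problem in Lemma 1.) -/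
theorem reduction_disjoint_of_not_adj {V : Type*} [LinearOrder V] (G : SimpleGraph V)
    {u v : V} (hne : u ≠ v) (h : ¬ G.Adj u v) (e : Sym2 V)
    (h1 : e ∈ reductionBlocked G u) (h2 : e ∈ reductionUnblocked G v) : False := by
  obtain ⟨w, rfl, hw, _⟩ := h1
  obtain ⟨x, hx, _, _⟩ := h2
  rw [Sym2.eq_iff] at hx
  rcases hx with ⟨a, _⟩ | ⟨_, b⟩
  · exact hne a
  · exact h (b ▸ hw)

/-- Core equivalence of the reduction from Minimum Graph Coloring to the Map
Merging Problem (Lemma 1): the vertex set can be partitioned into at most `k`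
classes within which the constructed maps pairwise agree if and only if `G`
is `k`-colorable. -/
theorem map_merging_partition_iff_colorable
    {V : Type*} [Fintype V] [LinearOrder V] (G : SimpleGraph V) (k : ℕ) :
    (∃ f : V → Fin k, ∀ u v : V, f u = f v → u ≠ v →
        MapAgrees (reductionBlocked G u, reductionUnblocked G u)
          (reductionBlocked G v, reductionUnblocked G v)) ↔
      G.Colorable k := by
  constructor
  · rintro ⟨f, hf⟩
    refine ⟨SimpleGraph.Coloring.mk f ?_⟩
    intro u v huv heq
    obtain ⟨h1, h2⟩ := hf u v heq huv.ne
    rcases lt_or_gt_of_ne huv.ne with hlt | hlt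
    · have hm : s(u, v) ∈ reductionBlocked G u ∩ reductionUnblocked G v :=
        ⟨⟨v, rfl, huv, hlt⟩, ⟨u, Sym2.eq_swap, huv.ne, Or.inr hlt⟩⟩
      exact (Set.eq_empty_iff_forall_notMem.mp h1 _) hm
    · have hm : s(u, v) ∈ reductionUnblocked G u ∩ reductionBlocked G v :=
        ⟨⟨v, rfl, huv.ne.symm, Or.inr hlt⟩, ⟨u, Sym2.eq_swap, huv.symm, hlt⟩⟩
      exact (Set.eq_empty_iff_forall_notMem.mp h2 _) hm
  · rintro ⟨c⟩
    refine ⟨c, fun u v heq hne => ?_⟩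
    have hadj : ¬ G.Adj u v := fun h => c.valid h heq
    refine ⟨Set.eq_empty_iff_forall_notMem.mpr ?_, Set.eq_empty_iff_forall_notMem.mpr ?_⟩
    · rintro e ⟨h1, h2⟩
      exact reduction_disjoint_of_not_adj G hne hadj e h1 h2
    · rintro e ⟨h1, h2⟩
      exact reduction_disjoint_of_not_adj G hne.symm (fun h => hadj h.symm) e h2 h1
end
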